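/- Let A be a noetherian local ring, n a natural number, and M and N finitely generated non-zero A-modules. Assume: (a) M is N-perfect with p := pd(M) ≤ n; (b) N satisfies the condition (C_n); (c) Tor^A_i(M, N) = 0 for all i > 0. Then M ⊗_A N satisfies the condition (C_{n−p}). -/

import Mathlib

noncomputable section

open TensorProduct

universe u v w





/-- The depth of the ideal `I` on the module `M`: the supremum of lengths of
`M`-regular sequences with entries in `I`. -/
noncomputable def idealDepth (A : Type u) [CommRing A] (I : Ideal A)
    (M : Type v) [AddCommGroup M] [Module A M] : ℕ∞ :=
  sSup {n : ℕ∞ | ∃ rs : List A, (rs.length : ℕ∞) = n ∧ (∀ r ∈ rs, r ∈ I) ∧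
    RingTheory.Sequence.IsRegular M rs}

/-- The depth of a module over a local ring. -/
noncomputable def localDepth (A : Type u) [CommRing A] [IsLocalRing A]
    (M : Type v) [AddCommGroup M] [Module A M] : ℕ∞ :=
  idealDepth A (IsLocalRing.maximalIdeal A) M

/-- The (Krull) dimension of a module, i.e. the Krull dimension of its support. -/
noncomputable def supportDim (A : Type u) [CommRing A]
    (M : Type v) [AddCommGroup M] [Module A M] : WithBot ℕ∞ :=
  Order.krullDim (Module.support A M)

/-- `depth (M_P)` : the depth of the localization of `M` at a prime `P`,
over the local ring `A_P`. -/
noncomputable def depthAt (A : Type u) [CommRing A]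
    (M : Type v) [AddCommGroup M] [Module A M] (P : PrimeSpectrum A) : ℕ∞ :=
  localDepth (Localization.AtPrime P.asIdeal) (LocalizedModule P.asIdeal.primeCompl M)

/-- `ht_M(P) = dim (M_P)` : the height of a prime `P` in the support of `M`,
i.e. the dimension of the localized module `M_P` over `A_P`. -/
noncomputable def heightAt (A : Type u) [CommRing A]
    (M : Type v) [AddCommGroup M] [Module A M] (P : PrimeSpectrum A) : WithBot ℕ∞ :=
  supportDim (Localization.AtPrime P.asIdeal) (LocalizedModule P.asIdeal.primeCompl M)

/-- Serre's condition `(S_n)` for a module: for every `P` in the support,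
`depth (M_P) ≥ min (n, ht_M(P))`. -/
def SerreCondS (A : Type u) [CommRing A] (n : ℕ)
    (M : Type v) [AddCommGroup M] [Module A M] : Prop :=
  ∀ P ∈ Module.support A M,
    min (n : WithBot ℕ∞) (heightAt A M P) ≤ (depthAt A M P : WithBot ℕ∞)

/-- The condition `(C_n)` for a module: for every `P` in the support,
`depth (M_P) ≥ min (n, ht_M(P)) - 1`, equivalently
`min (n, ht_M(P)) ≤ depth (M_P) + 1`. -/
def CondC (A : Type u) [CommRing A] (n : ℕ)
    (M : Type v) [AddCommGroup M] [Module A M] : Prop :=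
  ∀ P ∈ Module.support A M,
    min (n : WithBot ℕ∞) (heightAt A M P) ≤ (depthAt A M P : WithBot ℕ∞) + 1

/-- A module `M` is almost Cohen-Macaulay if `depth(P, M) = depth (M_P)` for every
`P` in the support of `M` (Kang's definition). -/
def IsAlmostCMModule (A : Type u) [CommRing A]
    (M : Type v) [AddCommGroup M] [Module A M] : Prop :=
  ∀ P ∈ Module.support A M, idealDepth A P.asIdeal M = depthAt A M P

/-- A module `M` is Cohen-Macaulay if `depth (M_P) = dim (M_P)` for every `P` in its
support. -/
def IsCMModule (A : Type u) [CommRing A]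
    (M : Type v) [AddCommGroup M] [Module A M] : Prop :=
  ∀ P ∈ Module.support A M, (depthAt A M P : WithBot ℕ∞) = heightAt A M P

/-- A ring is almost Cohen-Macaulay if it is an almost Cohen-Macaulay module over
itself. -/
abbrev IsAlmostCMRing (A : Type u) [CommRing A] : Prop := IsAlmostCMModule A A

/-- A ring is Cohen-Macaulay if it is a Cohen-Macaulay module over itself, i.e. all its
localizations at primes have depth equal to dimension. -/
abbrev IsCMRing (A : Type u) [CommRing A] : Prop := IsCMModule A A

/-- A ring satisfies `(C_n)` if it does so as a module over itself. -/
abbrev RingCondC (A : Type u) [CommRing A] (n : ℕ) : Prop := CondC A n A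

/-- A ring satisfies `(S_n)` if it does so as a module over itself. -/
abbrev RingSerreCondS (A : Type u) [CommRing A] (n : ℕ) : Prop := SerreCondS A n A





open CategoryTheory


/-- The `i`-th Ext group `Ext_A^i(M, N)`. -/
noncomputable def ExtGroup (A : Type u) [CommRing A] (M N : Type u)
    [AddCommGroup M] [Module A M] [AddCommGroup N] [Module A N] (i : ℕ) : Type u :=
  ((Ext A (ModuleCat.{u} A) i).obj (Opposite.op (ModuleCat.of A M))).obj (ModuleCat.of A N)

/-- The grade of `M` with respect to `N` : `grade(M, N) = inf { i | Ext^i_A(M, N) ≠ 0 }`. -/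
noncomputable def extGrade (A : Type u) [CommRing A] (M N : Type u)
    [AddCommGroup M] [Module A M] [AddCommGroup N] [Module A N] : ℕ∞ :=
  sInf {n : ℕ∞ | ∃ i : ℕ, n = i ∧ Nontrivial (ExtGroup A M N i)}

/-- The projective dimension of `M`, characterized by vanishing of Ext. -/
noncomputable def projDim (A : Type u) [CommRing A] (M : Type u)
    [AddCommGroup M] [Module A M] : ℕ∞ :=
  sInf {n : ℕ∞ | ∃ d : ℕ, n = d ∧ ∀ i : ℕ, d < i → ∀ Y : ModuleCat.{u} A,
    Subsingleton (((Ext A (ModuleCat.{u} A) i).obj (Opposite.op (ModuleCat.of A M))).obj Y)}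

/-- `M` is `N`-perfect if `grade(M, N) = pd(M) < ∞`. -/
def IsPerfectFor (A : Type u) [CommRing A] (M N : Type u)
    [AddCommGroup M] [Module A M] [AddCommGroup N] [Module A N] : Prop :=
  projDim A M ≠ ⊤ ∧ extGrade A M N = projDim A M

/-- The `i`-th Tor group `Tor^A_i(M, N)`. -/
noncomputable def TorGroup (A : Type u) [CommRing A] (M N : Type u)
    [AddCommGroup M] [Module A M] [AddCommGroup N] [Module A N] (i : ℕ) : Type u :=
  ((Tor (ModuleCat.{u} A) i).obj (ModuleCat.of A M)).obj (ModuleCat.of A N)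

/-!
Since `p ≤ grade(M, N)`, Rees' theorem gives an `N`-regular sequence of length `p` in the
annihilator of `M`. Localized at `P`, it stays regular and kills `M_P ⊗ N_P`, so `dim (M ⊗ N)_P`
is at most `dim N_P - p`. In the other direction, let `0 → K → F → M → 0` be exact with `F` finite
free. As the higher Tor groups vanish, tensoring with `N` and localizing keeps this sequence exact,
so `depth (M ⊗ N)_P ≥ min (depth (K ⊗ N)_P - 1, depth N_P)`. If `pd M > 0`, then `pd K < pd M`, and
by induction the depth drops by at most `pd M ≤ p`. Thus passing from `N` to `M ⊗ N` costs at least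
`p` in dimension and at most `p` in depth.
-/

section LeftDerived

open Limits

variable {C D : Type*} [Category* C] [Category* D] [Abelian C] [Abelian D]

/-- A sequence of additive functors with zero composition, evaluated degreewise on a chain complex.
On a projective resolution its homology sequence relates the left derived functors. -/
def mapChainComplexShortComplex {F₁ F₂ F₃ : C ⥤ D} [F₁.Additive] [F₂.Additive] [F₃.Additive]
    (α : F₁ ⟶ F₂) (β : F₂ ⟶ F₃) (hαβ : ∀ X, α.app X ≫ β.app X = 0) (K : ChainComplex C ℕ) :
    ShortComplex (ChainComplex D ℕ) where
  X₁ := (F₁.mapHomologicalComplex _).obj K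
  X₂ := (F₂.mapHomologicalComplex _).obj K
  X₃ := (F₃.mapHomologicalComplex _).obj K
  f := (NatTrans.mapHomologicalComplex α _).app K
  g := (NatTrans.mapHomologicalComplex β _).app K
  zero := by
    ext i
    exact hαβ (K.X i)

lemma fromLeftDerivedZero'_naturality_functor {F G : C ⥤ D} [F.Additive] [G.Additive] (α : F ⟶ G)
    {X : C} (Q : ProjectiveResolution X) :
    HomologicalComplex.opcyclesMap ((NatTrans.mapHomologicalComplex α _).app Q.complex) 0 ≫
      Q.fromLeftDerivedZero' G = Q.fromLeftDerivedZero' F ≫ α.app X := by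
  rw [← cancel_epi (HomologicalComplex.pOpcycles _ _), HomologicalComplex.p_opcyclesMap_assoc,
    Q.pOpcycles_comp_fromLeftDerivedZero', Q.pOpcycles_comp_fromLeftDerivedZero'_assoc]
  exact (α.naturality (Q.π.f 0)).symm

variable [HasProjectiveResolutions C]

lemma isZero_leftDerived_succ_obj_of_exact (F : C ⥤ D) [F.Additive] [PreservesFiniteLimits F]
    [PreservesFiniteColimits F] (i : ℕ) (X : C) : IsZero ((F.leftDerived (i + 1)).obj X) := by
  let Q := projectiveResolution X
  have hQ : ((F.mapHomologicalComplex _).obj Q.complex).ExactAt (i + 1) :=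
    (Q.complex_exactAt_succ i).map F
  exact hQ.isZero_homology.of_iso (Q.isoLeftDerivedObj F (i + 1))

lemma leftDerived_app_comp_fromLeftDerivedZero {F G : C ⥤ D} [F.Additive] [G.Additive]
    (α : F ⟶ G) (X : C) :
    (NatTrans.leftDerived α 0).app X ≫ G.fromLeftDerivedZero.app X =
      F.fromLeftDerivedZero.app X ≫ α.app X := by
  let Q := projectiveResolution X
  rw [Q.leftDerived_app_eq, Q.fromLeftDerivedZero_eq, Q.fromLeftDerivedZero_eq]
  simp only [Category.assoc, Iso.inv_hom_id_assoc]
  congr 1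
  refine (HomologicalComplex.homologyι_naturality_assoc
    ((NatTrans.mapHomologicalComplex α _).app Q.complex) 0 (Q.fromLeftDerivedZero' G)).trans ?_
  rw [fromLeftDerivedZero'_naturality_functor]
  exact (Category.assoc _ _ _).symm

variable {F₁ F₂ F₃ : C ⥤ D} [F₁.Additive] [F₂.Additive] [F₃.Additive] {α : F₁ ⟶ F₂}
  {β : F₂ ⟶ F₃} (hαβ : ∀ X, α.app X ≫ β.app X = 0)
  (hex : ∀ P : C, Projective P → (ShortComplex.mk (α.app P) (β.app P) (hαβ P)).ShortExact)
include hex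

lemma mono_leftDerived_app_of_isZero {i : ℕ} {X : C}
    (hX : IsZero ((F₃.leftDerived (i + 1)).obj X)) : Mono ((NatTrans.leftDerived α i).app X) := by
  let Q := projectiveResolution X
  have hQ : (mapChainComplexShortComplex α β hαβ Q.complex).ShortExact :=
    HomologicalComplex.shortExact_of_degreewise_shortExact _ fun j ↦ hex _ (Q.projective j)
  have : Mono ((HomologicalComplex.homologyFunctor D (ComplexShape.down ℕ) i).map
      ((NatTrans.mapHomologicalComplex α _).app Q.complex)) :=
    (hQ.homology_exact₁ (i + 1) i rfl).mono_g
      ((hX.of_iso (Q.isoLeftDerivedObj F₃ (i + 1)).symm).eq_zero_of_src _)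
  rw [Q.leftDerived_app_eq]
  infer_instance

lemma isZero_leftDerived_of_isZero {i : ℕ} {X : C} (hX₂ : IsZero ((F₂.leftDerived i).obj X))
    (hX₃ : IsZero ((F₃.leftDerived (i + 1)).obj X)) : IsZero ((F₁.leftDerived i).obj X) :=
  have := mono_leftDerived_app_of_isZero hαβ hex hX₃
  IsZero.of_mono ((NatTrans.leftDerived α i).app X) hX₂

lemma mono_app_of_isZero_leftDerived_one [PreservesFiniteColimits F₁] [PreservesFiniteColimits F₂]
    {X : C} (hX : IsZero ((F₃.leftDerived 1).obj X)) : Mono (α.app X) := by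
  have := mono_leftDerived_app_of_isZero hαβ hex hX
  have hα : α.app X = inv (F₁.fromLeftDerivedZero.app X) ≫
      (NatTrans.leftDerived α 0).app X ≫ F₂.fromLeftDerivedZero.app X := by
    rw [leftDerived_app_comp_fromLeftDerivedZero, IsIso.inv_hom_id_assoc]
  rw [hα]
  infer_instance

end LeftDerived

section Tor

open Limits MonoidalCategory

variable {A : Type u} [CommRing A]

lemma isZero_tor_succ_of_flat (X N : ModuleCat.{u} A) [Module.Flat A X] (i : ℕ) :
    IsZero (((Tor (ModuleCat.{u} A) (i + 1)).obj X).obj N) :=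
  isZero_leftDerived_succ_obj_of_exact (tensorLeft X) i N

variable {S : ShortComplex (ModuleCat.{u} A)} (hS : S.ShortExact)
include hS

lemma isZero_tor_X₁ [Module.Flat A S.X₂] {N : ModuleCat.{u} A} {i : ℕ}
    (h : IsZero (((Tor (ModuleCat.{u} A) (i + 2)).obj S.X₃).obj N)) :
    IsZero (((Tor (ModuleCat.{u} A) (i + 1)).obj S.X₁).obj N) :=
  isZero_leftDerived_of_isZero (α := (tensoringLeft _).map S.f) (β := (tensoringLeft _).map S.g)
    (fun P ↦ (S.map (tensorRight P)).zero) (fun P _ ↦ hS.map_of_exact (tensorRight P))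
    (isZero_tor_succ_of_flat S.X₂ N i) h

lemma shortExact_map_tensorRight {N : ModuleCat.{u} A}
    (h : IsZero (((Tor (ModuleCat.{u} A) 1).obj S.X₃).obj N)) :
    (S.map (tensorRight N)).ShortExact := by
  have hmono : Mono (S.f ▷ N) :=
    mono_app_of_isZero_leftDerived_one (α := (tensoringLeft _).map S.f)
      (β := (tensoringLeft _).map S.g) (fun P ↦ (S.map (tensorRight P)).zero)
      (fun P _ ↦ hS.map_of_exact (tensorRight P)) h
  exact ModuleCat.shortComplex_shortExact _
    (rTensor_exact N ((ShortComplex.ShortExact.moduleCat_exact_iff_function_exact S).mp hS.exact)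
      hS.moduleCat_surjective_g)
    ((ModuleCat.mono_iff_injective _).mp hmono)
    (LinearMap.rTensor_surjective N hS.moduleCat_surjective_g)

end Tor

section ExtTensor

open Limits MonoidalCategory

lemma isZero_of_sum_comp_eq_id {C ι : Type*} [Category* C] [Preadditive C] [Fintype ι] {X Y : C}
    (hY : IsZero Y) (a : ι → (X ⟶ Y)) (b : ι → (Y ⟶ X)) (hab : ∑ j, a j ≫ b j = 𝟙 X) :
    IsZero X := by
  rw [IsZero.iff_id_eq_zero, ← hab]
  exact Finset.sum_eq_zero fun j _ ↦ by rw [hY.eq_of_tgt (a j) 0, zero_comp]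

variable {A : Type u} [CommRing A]

lemma isZero_obj_of_finite_of_projective {D : Type*} [Category* D] [Preadditive D]
    (F : ModuleCat.{u} A ⥤ D) [F.Additive] (hA : IsZero (F.obj (ModuleCat.of A A)))
    (M : ModuleCat.{u} A) [Module.Finite A M] [Module.Projective A M] : IsZero (F.obj M) := by
  obtain ⟨n, f, g, -, -, hfg⟩ := Module.Finite.exists_comp_eq_id_of_projective A M
  let a (j : Fin n) : M ⟶ ModuleCat.of A A := ModuleCat.ofHom (LinearMap.proj j ∘ₗ g)
  let b (j : Fin n) : ModuleCat.of A A ⟶ M :=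
    ModuleCat.ofHom (f ∘ₗ LinearMap.single A (fun _ ↦ A) j)
  have hab : ∑ j, a j ≫ b j = 𝟙 M := by
    ext m
    simp only [a, b, ← ModuleCat.ofHom_comp, ModuleCat.hom_sum, ModuleCat.hom_ofHom,
      LinearMap.sum_apply, LinearMap.comp_apply, LinearMap.proj_apply, LinearMap.coe_single,
      ← map_sum, Finset.univ_sum_single]
    exact LinearMap.congr_fun hfg m
  exact isZero_of_sum_comp_eq_id hA (fun j ↦ F.map (a j)) (fun j ↦ F.map (b j)) (by
    simp_rw [← F.map_comp, ← F.map_sum, hab, F.map_id])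

variable {C : Type*} [Category* C] [Abelian C] [HasExt.{w} C]

lemma subsingleton_ext_of_iso (k : C) {X Y : C} (e : X ≅ Y) {i : ℕ}
    (hX : Subsingleton (Abelian.Ext k X i)) : Subsingleton (Abelian.Ext k Y i) :=
  AddCommGrpCat.subsingleton_of_isZero ((AddCommGrpCat.isZero_of_iff_subsingleton.mpr hX).of_iso
    ((Abelian.extFunctorObj k i).mapIso e.symm))

variable (G : ModuleCat.{u} A ⥤ C) [G.Additive] {N : ModuleCat.{u} A} (k : C)

lemma subsingleton_ext_map_tensor_of_projective (M : ModuleCat.{u} A) [Module.Finite A M]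
    [Module.Projective A M] {i : ℕ} (hN : Subsingleton (Abelian.Ext k (G.obj N) i)) :
    Subsingleton (Abelian.Ext k (G.obj (M ⊗ N)) i) := by
  let F := tensorRight N ⋙ G ⋙ Abelian.extFunctorObj k i
  have hA : IsZero (F.obj (ModuleCat.of A A)) :=
    (AddCommGrpCat.isZero_of_iff_subsingleton.mpr hN).of_iso
      ((G ⋙ Abelian.extFunctorObj k i).mapIso (λ_ N))
  exact AddCommGrpCat.subsingleton_of_isZero (isZero_obj_of_finite_of_projective F hA M)

lemma subsingleton_ext_map_tensor [IsNoetherianRing A] [PreservesFiniteLimits G]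
    [PreservesFiniteColimits G] {d : ℕ} (hN : ∀ i < d, Subsingleton (Abelian.Ext k (G.obj N) i))
    {p : ℕ} (M : ModuleCat.{u} A) [Module.Finite A M] [HasProjectiveDimensionLT M (p + 1)]
    (htor : ∀ i, IsZero (((Tor (ModuleCat.{u} A) (i + 1)).obj M).obj N)) {i : ℕ} (hi : i + p < d) :
    Subsingleton (Abelian.Ext k (G.obj (M ⊗ N)) i) := by
  induction p generalizing M i with
  | zero =>
    have : Module.Projective A M := (IsProjective.iff_projective _).mpr
      (projective_iff_hasProjectiveDimensionLT_one.mpr ‹_›)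
    exact subsingleton_ext_map_tensor_of_projective G k M (hN i hi)
  | succ p ih =>
    obtain ⟨r, g, hg⟩ := Module.Finite.exists_fin' A M
    have hS := LinearMap.shortExact_shortComplexKer hg
    have : Projective (ModuleCat.of A (Fin r → A)) :=
      (IsProjective.iff_projective _).mp inferInstance
    have : Module.Flat A (LinearMap.shortComplexKer g).X₂ :=
      inferInstanceAs (Module.Flat A (Fin r → A))
    have : HasProjectiveDimensionLT (ModuleCat.of A (LinearMap.ker g)) (p + 1) :=
      hS.hasProjectiveDimensionLT_X₁ (p + 1)
        (hasProjectiveDimensionLT_of_ge _ 1 (p + 1) (by lia)) ‹_›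
    have hExt₁ := ih (ModuleCat.of A (LinearMap.ker g))
      (fun j ↦ isZero_tor_X₁ hS (htor (j + 1))) (i := i + 1) (by lia)
    have hExt₂ := subsingleton_ext_map_tensor_of_projective G k (ModuleCat.of A (Fin r → A))
      (hN i (by lia))
    refine subsingleton_of_forall_eq 0 fun e ↦ ?_
    obtain ⟨x, rfl⟩ := Abelian.Ext.covariant_sequence_exact₃ k
      ((shortExact_map_tensorRight hS (htor 0)).map_of_exact G) e rfl (hExt₁.elim _ _)
    obtain rfl : x = 0 := hExt₂.elim _ _
    exact Abelian.Ext.zero_comp ..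

end ExtTensor

section Support

variable {A : Type*} [CommRing A] (M N : Type*) [AddCommGroup M] [Module A M] [AddCommGroup N]
  [Module A N]

/-- Localization commutes with tensor products; this transports supports and dimensions of
`M ⊗[A] N` to the localized tensor product. -/
def localizedModuleTensorEquiv (S : Submonoid A) :
    LocalizedModule S (M ⊗[A] N) ≃ₗ[Localization S]
      LocalizedModule S M ⊗[Localization S] LocalizedModule S N :=
  (IsLocalizedModule.linearEquiv S (LocalizedModule.mkLinearMap S (M ⊗[A] N))
      (TensorProduct.map (LocalizedModule.mkLinearMap S M)
        (LocalizedModule.mkLinearMap S N))).extendScalarsOfIsLocalization S (Localization S) ≪≫ₗ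
    (IsLocalization.moduleTensorEquiv S (Localization S) _ _).symm

lemma support_tensor_subset_left : Module.support A (M ⊗[A] N) ⊆ Module.support A M := by
  intro P hP
  by_contra hM
  have : Subsingleton (LocalizedModule P.asIdeal.primeCompl M) := Module.notMem_support_iff.mp hM
  exact Module.notMem_support_iff.mpr
    (localizedModuleTensorEquiv M N P.asIdeal.primeCompl).toEquiv.subsingleton hP

lemma support_tensor_subset_right : Module.support A (M ⊗[A] N) ⊆ Module.support A N :=
  (TensorProduct.comm A M N).support_eq ▸ support_tensor_subset_left N M

end Support

section Dimension

open RingTheory.Sequence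

lemma supportDim_tensor_add_length_le {R : Type*} [CommRing R] [IsNoetherianRing R] [IsLocalRing R]
    (L K : Type*) [AddCommGroup L] [Module R L] [AddCommGroup K] [Module R K] [Module.Finite R K]
    {rs : List R} (hreg : IsRegular K rs) (hrs : ∀ r ∈ rs, r ∈ Module.annihilator R L) :
    Module.supportDim R (L ⊗[R] K) + rs.length ≤ Module.supportDim R K := by
  have hsupp : Module.support R (L ⊗[R] K) ⊆
      Module.support R (K ⧸ Ideal.ofList rs • (⊤ : Submodule R K)) := by
    rw [Module.support_quotient]
    refine fun P hP ↦ ⟨support_tensor_subset_right L K hP, ?_⟩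
    rw [PrimeSpectrum.mem_zeroLocus, SetLike.coe_subset_coe, Ideal.ofList, Ideal.span_le]
    exact fun r hr ↦
      Module.annihilator_le_of_mem_support (support_tensor_subset_left L K hP) (hrs r hr)
  rw [← Module.supportDim_add_length_eq_supportDim_of_isRegular rs hreg]
  gcongr
  exact Order.krullDim_le_of_strictMono (Set.inclusion hsupp) fun _ _ h ↦ h

lemma heightAt_tensor_add_length_le {A : Type u} [CommRing A] [IsNoetherianRing A]
    (M : Type v) [AddCommGroup M] [Module A M] (N : Type w) [AddCommGroup N] [Module A N]
    [Module.Finite A N] {rs : List A}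
    (hreg : IsWeaklyRegular N rs) (hrs : ∀ r ∈ rs, r ∈ Module.annihilator A M)
    {P : PrimeSpectrum A} (hP : P ∈ Module.support A (M ⊗[A] N)) :
    heightAt A (M ⊗[A] N) P + rs.length ≤ heightAt A N P := by
  let S := P.asIdeal.primeCompl
  have : Nontrivial (LocalizedModule S N) := support_tensor_subset_right M N hP
  have hann := Module.annihilator_le_of_mem_support (support_tensor_subset_left M N hP)
  have hregP := hreg.isRegular_of_isLocalizedModule_of_mem (Localization.AtPrime P.asIdeal)
    P.asIdeal (LocalizedModule.mkLinearMap S N) fun r hr ↦ hann (hrs r hr)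
  have hrsP : ∀ r ∈ rs.map (algebraMap A (Localization S)),
      r ∈ Module.annihilator (Localization S) (LocalizedModule S M) := by
    simp only [List.mem_map, forall_exists_index, and_imp, forall_apply_eq_imp_iff₂,
      Module.mem_annihilator]
    intro r hr x
    induction x using LocalizedModule.induction_on with
    | h m s =>
      rw [algebraMap_smul, LocalizedModule.smul'_mk, Module.mem_annihilator.mp (hrs r hr),
        LocalizedModule.zero_mk]
  have hdim := supportDim_tensor_add_length_le _ _ hregP hrsP
  rwa [List.length_map, ← Module.supportDim_eq_of_equiv (localizedModuleTensorEquiv M N S)] at hdim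

end Dimension

section Depth

open IsLocalRing

lemma natCast_le_idealDepth_iff {A : Type u} [CommRing A] [IsNoetherianRing A] {I : Ideal A}
    {M : Type u} [AddCommGroup M] [Module A M] [Module.Finite A M]
    (hI : I • (⊤ : Submodule A M) < ⊤) {d : ℕ} :
    (d : ℕ∞) ≤ idealDepth A I M ↔
      ∀ i < d, Subsingleton (Abelian.Ext (ModuleCat.of A (A ⧸ I)) (ModuleCat.of A M) i) := by
  have hsupp : Module.support A (A ⧸ I) = PrimeSpectrum.zeroLocus I := by
    rw [Module.support_eq_zeroLocus, Ideal.annihilator_quotient]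
  constructor
  · intro h i hi
    obtain ⟨_, ⟨rs, rfl, hmem, hreg⟩, hlt⟩ := lt_sSup_iff.mp ((Nat.cast_lt.mpr hi).trans_le h)
    exact ModuleCat.subsingleton_ext_of_exists_isRegular I (ModuleCat.of A (A ⧸ I)) hsupp.subset
      (ModuleCat.of A M) hI rs hmem hreg i (Nat.cast_lt.mp hlt)
  · intro h
    obtain ⟨rs, rfl, hmem, hreg⟩ := ModuleCat.exists_isRegular_of_exists_subsingleton_ext I d
      (ModuleCat.of A M) hI (ModuleCat.of A (A ⧸ I)) hsupp h
    exact le_sSup ⟨rs, rfl, hmem, hreg⟩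

lemma natCast_le_localDepth_iff {R : Type u} [CommRing R] [IsLocalRing R] [IsNoetherianRing R]
    {L : Type u} [AddCommGroup L] [Module R L] [Module.Finite R L] [Nontrivial L] {d : ℕ} :
    (d : ℕ∞) ≤ localDepth R L ↔ ∀ i < d, Subsingleton
      (Abelian.Ext (ModuleCat.of R (R ⧸ maximalIdeal R)) (ModuleCat.of R L) i) :=
  natCast_le_idealDepth_iff (Submodule.top_ne_ideal_smul_of_le_jacobson_annihilator
    (maximalIdeal_le_jacobson _)).symm.lt_top

variable {A : Type u} [CommRing A]

/-- Localization of modules as an exact functor agrees with `LocalizedModule`, which carries Ext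
vanishing between the two: the functor takes values in a shrunk copy of `LocalizedModule`. -/
def localizedModuleFunctorObjIso (S : Submonoid A) (L : ModuleCat.{u} A) :
    (ModuleCat.localizedModuleFunctor.{u} S).obj L ≅
      ModuleCat.of (Localization S) (LocalizedModule S L) :=
  (Shrink.linearEquiv (Localization S) (LocalizedModule S L)).toModuleIso

lemma depthAt_le_depthAt_tensor_add [IsNoetherianRing A] {M N : Type u} [AddCommGroup M]
    [Module A M] [Module.Finite A M] [AddCommGroup N] [Module A N] [Module.Finite A N] {p : ℕ}
    [HasProjectiveDimensionLT (ModuleCat.of A M) (p + 1)]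
    (htor : ∀ i, 0 < i → Subsingleton (TorGroup A M N i)) {P : PrimeSpectrum A}
    (hP : P ∈ Module.support A (M ⊗[A] N)) :
    depthAt A N P ≤ depthAt A (M ⊗[A] N) P + p := by
  let S := P.asIdeal.primeCompl
  have : Nontrivial (LocalizedModule S N) := support_tensor_subset_right M N hP
  have : Nontrivial (LocalizedModule S (M ⊗[A] N)) := hP
  have htor' (i : ℕ) := ModuleCat.isZero_iff_subsingleton.mpr (htor (i + 1) i.succ_pos)
  refine ENat.forall_natCast_le_iff_le.mp fun d hd ↦ ?_
  have hN := natCast_le_localDepth_iff.mp hd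
  have hMN : ((d - p : ℕ) : ℕ∞) ≤ depthAt A (M ⊗[A] N) P :=
    natCast_le_localDepth_iff.mpr fun i hi ↦
      subsingleton_ext_of_iso _ (localizedModuleFunctorObjIso S _)
        (subsingleton_ext_map_tensor (ModuleCat.localizedModuleFunctor S) _
          (fun j hj ↦ subsingleton_ext_of_iso _ (localizedModuleFunctorObjIso S _).symm (hN j hj))
          (p := p) (ModuleCat.of A M) htor' (by lia))
  calc (d : ℕ∞) ≤ ((d - p : ℕ) : ℕ∞) + p := by norm_cast; lia
    _ ≤ depthAt A (M ⊗[A] N) P + p := by gcongr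

end Depth

section Grade

lemma subsingleton_abelianExt_of_subsingleton_ext {R : Type u} [Ring R] {C : Type v}
    [Category.{w} C] [Abelian C] [Linear R C] [EnoughProjectives C] [HasExt.{w} C] {X Y : C} {i : ℕ}
    (h : Subsingleton (((Ext R C i).obj (Opposite.op X)).obj Y)) :
    Subsingleton (Abelian.Ext X Y i) := by
  let Q := projectiveResolution X
  have hex : (Q.complex.linearYonedaObj R Y).ExactAt i := by
    rw [HomologicalComplex.exactAt_iff_isZero_homology]
    exact (ModuleCat.isZero_iff_subsingleton.mpr h).of_iso (Q.isoExt i Y).symm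
  refine subsingleton_of_forall_eq 0 fun e ↦ ?_
  obtain ⟨f, hf, rfl⟩ := Q.extMk_surjective e (i + 1) rfl
  cases i with
  | zero =>
    rw [HomologicalComplex.exactAt_iff' _ 0 0 1 (by simp) (by simp),
      ShortComplex.moduleCat_exact_iff] at hex
    obtain ⟨g, hg : Q.complex.d 0 0 ≫ (show Q.complex.X 0 ⟶ Y from g) = f⟩ := hex f hf
    obtain rfl : f = 0 := by
      rw [← hg, Q.complex.shape 0 0 (by simp), Limits.zero_comp]
    exact Q.extMk_zero _ _
  | succ i =>
    rw [HomologicalComplex.exactAt_iff' _ i (i + 1) (i + 2) (by simp) (by simp),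
      ShortComplex.moduleCat_exact_iff] at hex
    exact (Q.extMk_eq_zero_iff f (i + 2) rfl hf i rfl).mpr (hex f hf)

lemma hasProjectiveDimensionLT_of_projDim_le {A : Type u} [CommRing A] {M : Type u}
    [AddCommGroup M] [Module A M] {p : ℕ} (h : projDim A M ≤ p) :
    HasProjectiveDimensionLT (ModuleCat.of A M) (p + 1) := by
  obtain ⟨_, ⟨d, rfl, hd⟩, hlt⟩ := sInf_lt_iff.mp (h.trans_lt (Nat.cast_lt.mpr p.lt_succ_self))
  exact HasProjectiveDimensionLT.mk fun i hi Y e ↦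
    (subsingleton_abelianExt_of_subsingleton_ext
      (hd i ((Nat.cast_lt.mp hlt).trans_le hi) Y)).elim _ _

lemma subsingleton_abelianExt_of_lt_extGrade {A : Type u} [CommRing A] {M N : Type u}
    [AddCommGroup M] [Module A M] [AddCommGroup N] [Module A N] {i : ℕ}
    (h : (i : ℕ∞) < extGrade A M N) :
    Subsingleton (Abelian.Ext (ModuleCat.of A M) (ModuleCat.of A N) i) :=
  subsingleton_abelianExt_of_subsingleton_ext <| not_nontrivial_iff_subsingleton.mp fun hi ↦
    notMem_of_lt_csInf' h ⟨i, rfl, hi⟩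

lemma annihilator_smul_top_lt_top {A : Type u} [CommRing A] (M : Type v) (N : Type w)
    [AddCommGroup M] [Module A M] [AddCommGroup N] [Module A N] [Nontrivial (M ⊗[A] N)] :
    Module.annihilator A M • (⊤ : Submodule A N) < ⊤ := by
  refine lt_top_iff_ne_top.mpr fun htop ↦ not_subsingleton (M ⊗[A] N) ?_
  have tmul_eq_zero (m : M) (x : N) : m ⊗ₜ[A] x = 0 := by
    have hx : x ∈ Module.annihilator A M • (⊤ : Submodule A N) := by
      rw [htop]
      exact Submodule.mem_top
    induction hx using Submodule.smul_induction_on' with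
    | smul r hr y _ =>
      rw [TensorProduct.tmul_smul, TensorProduct.smul_tmul', Module.mem_annihilator.mp hr,
        TensorProduct.zero_tmul]
    | add y _ z _ hy hz => rw [TensorProduct.tmul_add, hy, hz, add_zero]
  refine subsingleton_of_forall_eq 0 fun t ↦ ?_
  induction t using TensorProduct.induction_on with
  | zero => rfl
  | tmul m x => exact tmul_eq_zero m x
  | add t s ht hs => rw [ht, hs, add_zero]

lemma exists_isRegular_of_le_extGrade {A : Type u} [CommRing A] [IsNoetherianRing A]
    {M N : Type u} [AddCommGroup M] [Module A M] [Module.Finite A M] [AddCommGroup N] [Module A N]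
    [Module.Finite A N] [Nontrivial (M ⊗[A] N)] {p : ℕ} (h : (p : ℕ∞) ≤ extGrade A M N) :
    ∃ rs : List A, rs.length = p ∧ (∀ r ∈ rs, r ∈ Module.annihilator A M) ∧
      RingTheory.Sequence.IsRegular N rs :=
  ModuleCat.exists_isRegular_of_exists_subsingleton_ext (Module.annihilator A M) p
    (ModuleCat.of A N) (annihilator_smul_top_lt_top M N) (ModuleCat.of A M)
    Module.support_eq_zeroLocus
    fun _ hi ↦ subsingleton_abelianExt_of_lt_extGrade ((Nat.cast_lt.mpr hi).trans_le h)

end Grade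

theorem tensor_condC_of_perfect_general (A : Type u) [CommRing A] [IsNoetherianRing A]
    (n : ℕ) (M N : Type u) [AddCommGroup M] [Module A M] [Module.Finite A M]
    [AddCommGroup N] [Module A N] [Module.Finite A N]
    (p : ℕ) (hpd : projDim A M ≤ p) (hgrade : p ≤ extGrade A M N) (hN : CondC A (n + p) N)
    (htor : ∀ i : ℕ, 0 < i → Subsingleton (TorGroup A M N i)) :
    CondC A n (M ⊗[A] N) := by
  intro P hP
  have : Nontrivial (M ⊗[A] N) := Module.nonempty_support_iff.mp ⟨P, hP⟩
  obtain ⟨rs, rfl, hann, hreg⟩ := exists_isRegular_of_le_extGrade hgrade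
  have := hasProjectiveDimensionLT_of_projDim_le hpd
  have hdepth := depthAt_le_depthAt_tensor_add (p := rs.length) htor hP
  have hheight := heightAt_tensor_add_length_le M N hreg.toIsWeaklyRegular hann hP
  have hcancel : AddLECancellable (rs.length : WithBot ℕ∞) :=
    (ENat.addLECancellable_natCast rs.length).withBot
  refine hcancel.add_le_add_iff_right.mp ?_
  calc min (n : WithBot ℕ∞) (heightAt A (M ⊗[A] N) P) + rs.length
      = min ((n + rs.length : ℕ) : WithBot ℕ∞) (heightAt A (M ⊗[A] N) P + rs.length) := by
        rw [min_add, Nat.cast_add]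
    _ ≤ min ((n + rs.length : ℕ) : WithBot ℕ∞) (heightAt A N P) := by gcongr
    _ ≤ (depthAt A N P : WithBot ℕ∞) + 1 := hN P (support_tensor_subset_right M N hP)
    _ ≤ ((depthAt A (M ⊗[A] N) P + rs.length : ℕ∞) : WithBot ℕ∞) + 1 := by
        gcongr; exact WithBot.coe_le_coe.mpr hdepth
    _ = (depthAt A (M ⊗[A] N) P : WithBot ℕ∞) + 1 + rs.length := by
        rw [WithBot.coe_add, WithBot.coe_natCast, add_right_comm]

theorem tensor_condC_of_perfect (A : Type u) [CommRing A] [IsNoetherianRing A] [IsLocalRing A]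
    (n : ℕ) (M N : Type u)
    [AddCommGroup M] [Module A M] [Module.Finite A M] [Nontrivial M]
    [AddCommGroup N] [Module A N] [Module.Finite A N] [Nontrivial N]
    (p : ℕ) (hpd : projDim A M = (p : ℕ∞)) (hperf : extGrade A M N = projDim A M)
    (hpn : p ≤ n)
    (hN : CondC A n N)
    (htor : ∀ i : ℕ, 0 < i → Subsingleton (TorGroup A M N i)) :
    CondC A (n - p) (M ⊗[A] N) :=
  tensor_condC_of_perfect_general A (n - p) M N p hpd.le (hperf.trans hpd).ge
    ((Nat.sub_add_cancel hpn).symm ▸ hN) htor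

end
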